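/- Let K satisfy Assumption A, let T > 0, and let f be a mass-conserving weak solution of the coagulation equation on [0,T] with kernel K and initial datum f_in, where f_in is nonzero and is not a single Dirac measure (there are no M, V ∈ (0,∞) with f_in = M·δ_V). Then for every t ∈ (0,T] and every R > 0 there exists a constant C(t,R) > 0 such that ∫_{[R,∞)} f(dv,t) ≥ C(t,R); in particular f([R,∞),t) > 0. -/

import Mathlib

open MeasureTheory Set Filter

noncomputable section

/-- Assumption A on the coagulation kernel `K(v,v') = h(v,v') g(v/(v+v'))`. -/
structure KernelAssumptionA (K : ℝ → ℝ → ℝ) (h : ℝ → ℝ → ℝ) (g : ℝ → ℝ)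
    (γ H H₀ H₁ G₀ G₁ k : ℝ) : Prop where
  K_nonneg : ∀ v v', 0 ≤ v → 0 ≤ v' → 0 ≤ K v v'
  K_eq : ∀ v v', 0 ≤ v → 0 ≤ v' → 0 < v + v' →
      K v v' = h v v' * g (v / (v + v'))
  h_cont : ContinuousOn (fun p : ℝ × ℝ => h p.1 p.2) (Ici 0 ×ˢ Ici 0)
  h_symm : ∀ v v', h v v' = h v' v
  γ_gt_one : 1 < γ
  H_gt_one : 1 < H
  H₀_pos : 0 < H₀
  h_lower : ∀ v v', 0 ≤ v → 0 ≤ v' → H < v + v' →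
      H₀ * (v ^ γ + v' ^ γ) ≤ h v v'
  h_posOn : ∀ R : ℝ, 0 < R → ∃ C : ℝ, 0 < C ∧
      ∀ v ∈ Icc (1 / R) R, ∀ v' ∈ Icc (1 / R) R, C ≤ h v v'
  H₁_pos : 0 < H₁
  h_upper : ∀ v v', 0 ≤ v → 0 ≤ v' → h v v' ≤ H₁ * (v ^ γ + v' ^ γ)
  g_cont : ContinuousOn g (Icc 0 1)
  g_symm : ∀ x ∈ Icc (0 : ℝ) 1, g x = g (1 - x)
  g_half : g (1 / 2) = 0
  G₀_pos : 0 < G₀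
  G₁_pos : 0 < G₁
  k_ge_one : 1 ≤ k
  g_lower : ∀ x ∈ Icc (0 : ℝ) 1, G₀ * |x - 1 / 2| ^ k ≤ g x
  g_upper : ∀ x ∈ Icc (0 : ℝ) 1, g x ≤ G₁

/-- Weak solution of the coagulation equation on `[0, T]` with kernel `K`
and initial datum `fin`, in the sense of measures on `(0,∞)`. -/
structure IsWeakSolution (K : ℝ → ℝ → ℝ) (γ T : ℝ)
    (f : ℝ → Measure ℝ) (fin : Measure ℝ) : Prop where
  conc : ∀ t ∈ Icc (0 : ℝ) T, f t (Iic 0) = 0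
  time_cont : ∀ φ : ℝ → ℝ, Continuous φ → (∃ M : ℝ, ∀ v, |φ v| ≤ M) →
      ContinuousOn (fun t => ∫ v, φ v ∂(f t)) (Icc (0 : ℝ) T)
  moment_bound : ∃ C : ℝ, ∀ t ∈ Icc (0 : ℝ) T,
      Integrable (fun v => 1 + v ^ γ) (f t) ∧ (∫ v, (1 + v ^ γ) ∂(f t)) ≤ C
  weak_form : ∀ φ : ℝ → ℝ, Continuous φ → HasCompactSupport φ →
      tsupport φ ⊆ Ioi 0 → ∀ t ∈ Icc (0 : ℝ) T,
      (∫ v, φ v ∂(f t)) - (∫ v, φ v ∂fin) =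
        (1 / 2) * ∫ s in (0 : ℝ)..t,
          (∫ v, (∫ v', K v v' * (φ (v + v') - φ v - φ v') ∂(f s)) ∂(f s))

/-- The solution conserves mass on `[0, T]`. -/
def IsMassConserving (T : ℝ) (f : ℝ → Measure ℝ) (fin : Measure ℝ) : Prop :=
  Integrable (fun v => v) fin ∧
    ∀ t ∈ Icc (0 : ℝ) T,
      Integrable (fun v => v) (f t) ∧ (∫ v, v ∂(f t)) = ∫ v, v ∂fin

/-- `μ` is a single Dirac measure `M • δ_V` with `M, V ∈ (0,∞)`. -/
def IsSingleDirac (μ : Measure ℝ) : Prop :=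
  ∃ M V : ℝ, 0 < M ∧ 0 < V ∧ μ = ENNReal.ofReal M • Measure.dirac V

/-!
For a nonnegative test function `φ`, the loss part of the collision operator is at most a multiple
of `∫ φ df_s`, because `φ` has compact support in `(0,∞)` and the moments of `f_s` are bounded.
Hence `y(s) = ∫ φ df_s` satisfies `y' ≥ gain / 2 - C y`, and Grönwall's inequality run backwards in
time shows that `y(t) = 0` forces `y = 0` on `[0,t]`; the gain must then vanish as well. In terms of
supports: a point of the support of `f_0` stays in the support of every later `f_t`, and if two
distinct points `p`, `q` lie in the support of `f_s` for all `s > 0`, so does `p + q`, since the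
kernel vanishes only on the diagonal. The support of a nonzero measure that is not a Dirac mass
contains points `a ≠ b`, so that of `f_t` contains `a + n b` for all `n`.
-/

section WeaklyContinuousFamilies

variable {X Y : Type*} [TopologicalSpace X] [MeasurableSpace X] [OpensMeasurableSpace X]
  [TopologicalSpace Y] [MeasurableSpace Y] [BorelSpace Y] [HasOuterApproxClosed Y]
  {μ : X → FiniteMeasure Y}

lemma measurable_of_continuous_finiteMeasure (hμ : Continuous μ) : Measurable μ := by
  have measurable_apply (A : Set Y) (hA : IsClosed A) :
      Measurable fun x => (μ x : Measure Y) A := by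
    refine measurable_of_tendsto_metrizable
      (f := fun n x => ∫⁻ y, hA.apprSeq n y ∂(μ x : Measure Y)) (fun n => ?_)
      (tendsto_pi_nhds.2 fun x => HasOuterApproxClosed.tendsto_lintegral_apprSeq hA _)
    exact ((FiniteMeasure.continuous_lintegral_boundedContinuousFunction _).comp hμ).measurable
  refine Measurable.subtype_mk (.measure_of_isPiSystem (S := {A | IsClosed A}) ?_
    isPiSystem_isClosed measurable_apply (measurable_apply _ isClosed_univ))
  rw [← borel_eq_generateFrom_isClosed]
  exact BorelSpace.measurable_eq

lemma stronglyMeasurable_integral_prod_self (hμ : Continuous μ) {ψ : Y × Y → ℝ}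
    (hψ : StronglyMeasurable ψ) :
    StronglyMeasurable fun x => ∫ p, ψ p ∂((μ x : Measure Y).prod (μ x)) := by
  have hμ' := measurable_of_continuous_finiteMeasure hμ
  let κ : ProbabilityTheory.Kernel X (Y × Y) :=
    ⟨fun x => (μ x : Measure Y).prod (μ x),
      FiniteMeasure.measurable_fun_prod.comp (hμ'.prodMk hμ')⟩
  exact hψ.integral_kernel (κ := κ)

end WeaklyContinuousFamilies

section Gronwall

variable {u : ℝ → ℝ} {a b C : ℝ}

lemma eqOn_zero_of_le_mul_integral_left (hu : ContinuousOn u (Icc a b))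
    (hu₀ : ∀ s ∈ Icc a b, 0 ≤ u s) (hle : ∀ s ∈ Icc a b, u s ≤ C * ∫ r in a..s, u r) :
    EqOn u 0 (Icc a b) := by
  have hint : ∀ s ∈ Icc a b, IntervalIntegrable u volume a s := fun s hs =>
    (hu.mono (Icc_subset_Icc_right hs.2)).intervalIntegrable_of_Icc hs.1
  have hderiv : ∀ s ∈ Ico a b,
      HasDerivWithinAt (fun s => ∫ r in a..s, u r) (u s) (Ici s) s := fun s hs => by
    have hsub : Icc s b ⊆ Icc a b := Icc_subset_Icc_left hs.1
    have hmem : Icc s b ∈ nhdsWithin s (Ioi s) :=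
      mem_of_superset (Ioo_mem_nhdsGT hs.2) Ioo_subset_Icc_self
    refine intervalIntegral.integral_hasDerivWithinAt_right (t := Ioi s)
      (hint s (Ico_subset_Icc_self hs)) ?_ ?_
    · exact ⟨Icc s b, hmem, (hu.mono hsub).aestronglyMeasurable measurableSet_Icc⟩
    · exact ((hu.mono hsub) s ⟨le_rfl, hs.2.le⟩).mono_of_mem_nhdsWithin hmem
  have hprim : ∀ s ∈ Icc a b, ∫ r in a..s, u r = 0 := by
    refine eq_zero_of_abs_deriv_le_mul_abs_self_of_eq_zero_right (K := C) ?_ hderiv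
      intervalIntegral.integral_same fun s hs => ?_
    · rcases le_or_gt a b with hab | hab
      · exact (intervalIntegral.continuousOn_primitive_interval
          (hu.integrableOn_Icc.mono_set (uIcc_of_le hab).le)).mono (uIcc_of_le hab).ge
      · simp [hab]
    · have hs' := Ico_subset_Icc_self hs
      rw [Real.norm_of_nonneg (hu₀ s hs'), Real.norm_of_nonneg]
      · exact hle s hs'
      · exact intervalIntegral.integral_nonneg hs.1 fun r hr => hu₀ r ⟨hr.1, hr.2.trans hs'.2⟩
  intro s hs
  refine le_antisymm ?_ (hu₀ s hs)
  simpa only [hprim s hs, mul_zero, Pi.zero_apply] using hle s hs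

lemma eqOn_zero_of_le_mul_integral_right (hu : ContinuousOn u (Icc a b))
    (hu₀ : ∀ s ∈ Icc a b, 0 ≤ u s) (hle : ∀ s ∈ Icc a b, u s ≤ C * ∫ r in s..b, u r) :
    EqOn u 0 (Icc a b) := by
  have hreflect : ∀ s ∈ Icc a b, a + b - s ∈ Icc a b := fun s hs =>
    ⟨by linarith [hs.2], by linarith [hs.1]⟩
  have hzero := eqOn_zero_of_le_mul_integral_left (u := fun s => u (a + b - s)) (C := C)
    (hu.comp (by fun_prop) hreflect) (fun s hs => hu₀ _ (hreflect s hs)) fun s hs => by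
      rw [intervalIntegral.integral_comp_sub_left, add_sub_cancel_left]
      exact hle _ (hreflect s hs)
  intro s hs
  simpa only [sub_sub_cancel, Pi.zero_apply] using hzero (hreflect s hs)

end Gronwall

lemma mem_support_prod {X Y : Type*} [TopologicalSpace X] [MeasurableSpace X] [TopologicalSpace Y]
    [MeasurableSpace Y] {μ : Measure X} {ν : Measure Y} [SFinite ν] {x : X} {y : Y}
    (hx : x ∈ μ.support) (hy : y ∈ ν.support) : (x, y) ∈ (μ.prod ν).support := by
  rw [Measure.mem_support_iff_forall] at hx hy ⊢
  intro W hW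
  obtain ⟨U, hU, V, hV, hUV⟩ := mem_nhds_prod_iff.1 hW
  calc 0 < μ U * ν V := ENNReal.mul_pos (hx U hU).ne' (hy V hV).ne'
    _ = μ.prod ν (U ×ˢ V) := (Measure.prod_prod U V).symm
    _ ≤ μ.prod ν W := measure_mono hUV

lemma integral_pos_of_mem_support {X : Type*} [TopologicalSpace X] [MeasurableSpace X]
    {μ : Measure X} {x : X} (hx : x ∈ μ.support) {ψ : X → ℝ} (hψ₀ : 0 ≤ᵐ[μ] ψ)
    (hψ : Integrable ψ μ) (hpos : ∀ᶠ y in nhds x, 0 < ψ y) : 0 < ∫ y, ψ y ∂μ := by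
  rw [integral_pos_iff_support_of_nonneg_ae hψ₀ hψ]
  exact ((Measure.mem_support_iff_forall x).1 hx _ hpos).trans_le
    (measure_mono fun y hy => ne_of_gt hy)

lemma eq_smul_dirac_of_ae_eq {X : Type*} [MeasurableSpace X] {μ : Measure X} {a : X}
    (h : ∀ᵐ x ∂μ, x = a) : μ = μ univ • Measure.dirac a := by
  have hmap : μ.map id = μ.map fun _ => a := Measure.map_congr h
  rwa [Measure.map_id, Measure.map_const] at hmap

lemma ae_pos_of_measure_Iic_zero {μ : Measure ℝ} (hμ : μ (Iic 0) = 0) : ∀ᵐ v ∂μ, 0 < v := by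
  simp only [ae_iff, not_lt]
  exact hμ

lemma exists_ne_mem_support_of_not_isSingleDirac {μ : Measure ℝ} [IsFiniteMeasure μ]
    (hμ : μ (Iic 0) = 0) (hne : μ ≠ 0) (hdirac : ¬ IsSingleDirac μ) :
    ∃ a ∈ μ.support, ∃ b ∈ μ.support, 0 < a ∧ 0 < b ∧ a ≠ b := by
  have hae : ∀ᵐ v ∂μ, v ∈ μ.support ∧ 0 < v := by
    filter_upwards [Measure.support_mem_ae, ae_pos_of_measure_Iic_zero hμ] with v hv hv₀
    exact ⟨hv, hv₀⟩
  have : NeZero μ := ⟨hne⟩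
  obtain ⟨a, ha, ha₀⟩ := hae.exists
  by_contra! honly
  have hconst : ∀ᵐ v ∂μ, v = a := by
    filter_upwards [hae] with v hv
    exact (honly a ha v hv.1 ha₀ hv.2).symm
  refine hdirac ⟨μ.real univ, a, measureReal_univ_pos, ha₀, ?_⟩
  · rw [ofReal_measureReal]
    exact eq_smul_dirac_of_ae_eq hconst

section MomentBounds

variable {γ m : ℝ} {μ : Measure ℝ}

lemma isFiniteMeasure_of_integrable_one_add_rpow (hμ : μ (Iic 0) = 0)
    (hint : Integrable (fun v => 1 + v ^ γ) μ) : IsFiniteMeasure μ := by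
  have hone : Integrable (fun _ => (1 : ℝ)) μ := by
    refine hint.mono' aestronglyMeasurable_const ?_
    filter_upwards [ae_pos_of_measure_Iic_zero hμ] with v hv
    simpa only [norm_one, le_add_iff_nonneg_right] using Real.rpow_nonneg hv.le γ
  exact (integrable_const_iff.1 hone).resolve_left one_ne_zero

/-- The class of measures on `(0,∞)`, encoded as measures on `ℝ`, in which a weak solution takes its
values: those with `∫ (1 + v ^ γ) dμ ≤ m`. -/
structure IsMomentBounded (γ m : ℝ) (μ : Measure ℝ) : Prop where
  measure_Iic_zero : μ (Iic 0) = 0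
  integrable_one_add_rpow : Integrable (fun v => 1 + v ^ γ) μ
  integral_one_add_rpow_le : ∫ v, (1 + v ^ γ) ∂μ ≤ m

namespace IsMomentBounded

lemma isFiniteMeasure (hμ : IsMomentBounded γ m μ) : IsFiniteMeasure μ :=
  isFiniteMeasure_of_integrable_one_add_rpow hμ.measure_Iic_zero hμ.integrable_one_add_rpow

lemma ae_pos (hμ : IsMomentBounded γ m μ) : ∀ᵐ v ∂μ, 0 < v :=
  ae_pos_of_measure_Iic_zero hμ.measure_Iic_zero

lemma ae_prod_pos (hμ : IsMomentBounded γ m μ) : ∀ᵐ p ∂μ.prod μ, 0 < p.1 ∧ 0 < p.2 := by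
  have := hμ.isFiniteMeasure
  filter_upwards [Measure.quasiMeasurePreserving_fst.ae hμ.ae_pos,
    Measure.quasiMeasurePreserving_snd.ae hμ.ae_pos] with p h₁ h₂
  exact ⟨h₁, h₂⟩

lemma integral_one_add_rpow_nonneg (hμ : IsMomentBounded γ m μ) : 0 ≤ ∫ v, (1 + v ^ γ) ∂μ := by
  refine integral_nonneg_of_ae ?_
  filter_upwards [hμ.ae_pos] with v hv
  exact add_nonneg zero_le_one (Real.rpow_nonneg hv.le γ)

end IsMomentBounded

end MomentBounds

section TestFunctions

/-- The nonnegative continuous functions with compact support in `(0,∞)`, extended by zero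
to `ℝ`. -/
structure IsNonnegTestFunction (φ : ℝ → ℝ) : Prop where
  continuous : Continuous φ
  hasCompactSupport : HasCompactSupport φ
  tsupport_subset : tsupport φ ⊆ Ioi 0
  nonneg : ∀ v, 0 ≤ φ v

namespace IsNonnegTestFunction

variable {φ : ℝ → ℝ}

lemma exists_abs_le (hφ : IsNonnegTestFunction φ) : ∃ M, ∀ v, |φ v| ≤ M :=
  hφ.hasCompactSupport.exists_bound_of_continuous hφ.continuous

lemma exists_abs_add_sub_sub_le (hφ : IsNonnegTestFunction φ) :
    ∃ M, ∀ p : ℝ × ℝ, |φ (p.1 + p.2) - φ p.1 - φ p.2| ≤ M := by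
  obtain ⟨M, hM⟩ := hφ.exists_abs_le
  exact ⟨M + M + M, fun p =>
    (abs_sub _ _).trans (add_le_add ((abs_sub _ _).trans (add_le_add (hM _) (hM _))) (hM _))⟩

lemma integrable (hφ : IsNonnegTestFunction φ) (μ : Measure ℝ) [IsFiniteMeasure μ] :
    Integrable φ μ :=
  hφ.continuous.integrable_of_hasCompactSupport hφ.hasCompactSupport

lemma exists_mul_one_add_rpow_le (hφ : IsNonnegTestFunction φ) (γ : ℝ) :
    ∃ B, 0 ≤ B ∧ ∀ v, φ v * (1 + v ^ γ) ≤ B * φ v := by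
  have hcont : ContinuousOn (fun v : ℝ => 1 + v ^ γ) (tsupport φ) := fun v hv =>
    (continuousAt_const.add
      (Real.continuousAt_rpow_const v γ (.inl (hφ.tsupport_subset hv).ne'))).continuousWithinAt
  obtain ⟨B, hB⟩ := hφ.hasCompactSupport.isCompact.exists_bound_of_continuousOn hcont
  refine ⟨max B 0, le_max_right B 0, fun v => ?_⟩
  by_cases hv : v ∈ tsupport φ
  · rw [mul_comm]
    exact mul_le_mul_of_nonneg_right
      ((le_abs_self _).trans ((hB v hv).trans (le_max_left B 0))) (hφ.nonneg v)
  · rw [image_eq_zero_of_notMem_tsupport hv, zero_mul, mul_zero]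

end IsNonnegTestFunction

lemma mem_support_iff_forall_isNonnegTestFunction {μ : Measure ℝ} [IsFiniteMeasure μ] {x : ℝ}
    (hx : 0 < x) :
    x ∈ μ.support ↔ ∀ φ, IsNonnegTestFunction φ → 0 < φ x → 0 < ∫ v, φ v ∂μ := by
  refine ⟨fun h φ hφ hpos => ?_, fun h => ?_⟩
  · exact integral_pos_of_mem_support h (ae_of_all _ hφ.nonneg) (hφ.integrable μ)
      (hφ.continuous.continuousAt.eventually_const_lt hpos)
  rw [Measure.mem_support_iff_forall]
  intro U hU
  obtain ⟨φ, hsub, hcompact, hsmooth, hrange, hφx⟩ :=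
    exists_contDiff_tsupport_subset (n := 0) (inter_mem hU (Ioi_mem_nhds hx))
  have hφ : IsNonnegTestFunction φ :=
    ⟨hsmooth.continuous, hcompact, hsub.trans inter_subset_right,
      fun v => (hrange (mem_range_self v)).1⟩
  have hint := h φ hφ (by rw [hφx]; exact one_pos)
  rw [integral_pos_iff_support_of_nonneg hφ.nonneg (hφ.integrable μ)] at hint
  exact hint.trans_le (measure_mono ((subset_tsupport φ).trans (hsub.trans inter_subset_left)))

end TestFunctions

section CollisionOperator

/-- Coagulation kernels on `(0,∞)²` that vanish at most on the diagonal, with growth of order `γ` in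
each variable. Only the values on the open quadrant matter. -/
structure IsOffDiagPositiveKernel (K : ℝ → ℝ → ℝ) (γ : ℝ) : Prop where
  measurable_indicator :
    Measurable ((Ioi (0 : ℝ) ×ˢ Ioi (0 : ℝ)).indicator fun p : ℝ × ℝ => K p.1 p.2)
  nonneg : ∀ v v', 0 < v → 0 < v' → 0 ≤ K v v'
  pos_of_ne : ∀ v v', 0 < v → 0 < v' → v ≠ v' → 0 < K v v'
  exists_le : ∃ C, 0 ≤ C ∧ ∀ v v', 0 < v → 0 < v' → K v v' ≤ C * ((1 + v ^ γ) * (1 + v' ^ γ))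

/-- The collision operator tested against `φ`: the integrand in time of the weak formulation,
without its factor `1 / 2`. -/
def coagulationRate (K : ℝ → ℝ → ℝ) (φ : ℝ → ℝ) (μ : Measure ℝ) : ℝ :=
  ∫ p : ℝ × ℝ, K p.1 p.2 * (φ (p.1 + p.2) - φ p.1 - φ p.2) ∂(μ.prod μ)

/-- The part of `coagulationRate` accounting for the creation of particles of size `v + v'`. -/
def coagulationGain (K : ℝ → ℝ → ℝ) (φ : ℝ → ℝ) (μ : Measure ℝ) : ℝ :=
  ∫ p : ℝ × ℝ, K p.1 p.2 * φ (p.1 + p.2) ∂(μ.prod μ)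

namespace IsOffDiagPositiveKernel

variable {K : ℝ → ℝ → ℝ} {γ m : ℝ} {φ : ℝ → ℝ} {μ : Measure ℝ}

lemma indicator_ae_eq (K : ℝ → ℝ → ℝ) (hμ : IsMomentBounded γ m μ) :
    (Ioi (0 : ℝ) ×ˢ Ioi (0 : ℝ)).indicator (fun p : ℝ × ℝ => K p.1 p.2) =ᵐ[μ.prod μ]
      fun p => K p.1 p.2 := by
  filter_upwards [hμ.ae_prod_pos] with p hp
  exact indicator_of_mem (show p ∈ Ioi 0 ×ˢ Ioi 0 from hp) fun p : ℝ × ℝ => K p.1 p.2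

lemma integrable (hK : IsOffDiagPositiveKernel K γ) (hμ : IsMomentBounded γ m μ) :
    Integrable (fun p : ℝ × ℝ => K p.1 p.2) (μ.prod μ) := by
  have := hμ.isFiniteMeasure
  obtain ⟨C, -, hC⟩ := hK.exists_le
  refine ((hμ.integrable_one_add_rpow.mul_prod hμ.integrable_one_add_rpow).const_mul C).mono'
    (hK.measurable_indicator.aestronglyMeasurable.congr (indicator_ae_eq K hμ)) ?_
  filter_upwards [hμ.ae_prod_pos] with p ⟨h₁, h₂⟩
  rw [Real.norm_of_nonneg (hK.nonneg _ _ h₁ h₂)]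
  exact hC _ _ h₁ h₂

lemma integrable_mul (hK : IsOffDiagPositiveKernel K γ) (hμ : IsMomentBounded γ m μ)
    {ψ : ℝ × ℝ → ℝ} (hψ : Continuous ψ) {M : ℝ} (hM : ∀ p, |ψ p| ≤ M) :
    Integrable (fun p => K p.1 p.2 * ψ p) (μ.prod μ) :=
  (hK.integrable hμ).mul_bdd hψ.aestronglyMeasurable (ae_of_all _ hM)

lemma exists_abs_integral_mul_le (hK : IsOffDiagPositiveKernel K γ) (m M : ℝ) :
    ∃ B, ∀ μ, IsMomentBounded γ m μ → ∀ ψ : ℝ × ℝ → ℝ, (∀ p, |ψ p| ≤ M) →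
      |∫ p, K p.1 p.2 * ψ p ∂(μ.prod μ)| ≤ B := by
  obtain ⟨C, hC₀, hC⟩ := hK.exists_le
  refine ⟨C * (m * m) * M, fun μ hμ ψ hM => ?_⟩
  have := hμ.isFiniteMeasure
  have hM₀ : 0 ≤ M := (abs_nonneg _).trans (hM 0)
  calc |∫ p, K p.1 p.2 * ψ p ∂(μ.prod μ)|
      ≤ ∫ p : ℝ × ℝ, C * ((1 + p.1 ^ γ) * (1 + p.2 ^ γ)) * M ∂(μ.prod μ) := by
        refine norm_integral_le_of_norm_le (f := fun p : ℝ × ℝ => K p.1 p.2 * ψ p)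
          (((hμ.integrable_one_add_rpow.mul_prod
            hμ.integrable_one_add_rpow).const_mul C).mul_const M) ?_
        filter_upwards [hμ.ae_prod_pos] with p ⟨h₁, h₂⟩
        have hKp := hK.nonneg _ _ h₁ h₂
        rw [norm_mul, Real.norm_of_nonneg hKp]
        exact mul_le_mul (hC _ _ h₁ h₂) (hM p) (abs_nonneg _) (hKp.trans (hC _ _ h₁ h₂))
    _ = C * ((∫ v, (1 + v ^ γ) ∂μ) * ∫ v, (1 + v ^ γ) ∂μ) * M := by
        rw [integral_mul_const, integral_const_mul,
          integral_prod_mul (fun v : ℝ => 1 + v ^ γ) fun v : ℝ => 1 + v ^ γ]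
    _ ≤ C * (m * m) * M := by
        have h₀ := hμ.integral_one_add_rpow_nonneg
        have hle := hμ.integral_one_add_rpow_le
        exact mul_le_mul_of_nonneg_right (mul_le_mul_of_nonneg_left
          (mul_le_mul hle hle h₀ (h₀.trans hle)) hC₀) hM₀

lemma coagulationGain_nonneg (hK : IsOffDiagPositiveKernel K γ) (hφ : ∀ v, 0 ≤ φ v)
    (hμ : IsMomentBounded γ m μ) : 0 ≤ coagulationGain K φ μ := by
  refine integral_nonneg_of_ae ?_
  filter_upwards [hμ.ae_prod_pos] with p ⟨h₁, h₂⟩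
  exact mul_nonneg (hK.nonneg _ _ h₁ h₂) (hφ _)

lemma coagulationGain_pos (hK : IsOffDiagPositiveKernel K γ) (hφ : IsNonnegTestFunction φ)
    (hμ : IsMomentBounded γ m μ) {p q : ℝ} (hp₀ : 0 < p) (hq₀ : 0 < q) (hpq : p ≠ q)
    (hp : p ∈ μ.support) (hq : q ∈ μ.support) (hφpq : 0 < φ (p + q)) :
    0 < coagulationGain K φ μ := by
  have := hμ.isFiniteMeasure
  obtain ⟨M, hM⟩ := hφ.exists_abs_le
  have hcont : Continuous fun r : ℝ × ℝ => φ (r.1 + r.2) := hφ.continuous.comp continuous_add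
  refine integral_pos_of_mem_support (mem_support_prod hp hq) ?_
    (hK.integrable_mul hμ hcont fun _ => hM _) ?_
  · filter_upwards [hμ.ae_prod_pos] with r ⟨h₁, h₂⟩
    exact mul_nonneg (hK.nonneg _ _ h₁ h₂) (hφ.nonneg _)
  · filter_upwards [continuousAt_fst.eventually_const_lt hp₀,
      continuousAt_snd.eventually_const_lt hq₀,
      (continuousAt_fst.ne_iff_eventually_ne continuousAt_snd).1 hpq,
      hcont.continuousAt.eventually_const_lt hφpq] with r h₁ h₂ hne hpos
    exact mul_pos (hK.pos_of_ne _ _ h₁ h₂ hne) hpos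

lemma exists_loss_le (hK : IsOffDiagPositiveKernel K γ) (hφ : IsNonnegTestFunction φ) :
    ∃ A, 0 ≤ A ∧ ∀ v v', 0 < v → 0 < v' →
      K v v' * (φ v + φ v') ≤ A * (φ v * (1 + v' ^ γ) + (1 + v ^ γ) * φ v') := by
  obtain ⟨C, hC₀, hC⟩ := hK.exists_le
  obtain ⟨B, hB₀, hB⟩ := hφ.exists_mul_one_add_rpow_le γ
  refine ⟨C * B, mul_nonneg hC₀ hB₀, fun v v' hv hv' => ?_⟩
  have hw := add_nonneg zero_le_one (Real.rpow_nonneg hv.le γ)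
  have hw' := add_nonneg zero_le_one (Real.rpow_nonneg hv'.le γ)
  calc K v v' * (φ v + φ v')
      ≤ C * ((1 + v ^ γ) * (1 + v' ^ γ)) * (φ v + φ v') :=
        mul_le_mul_of_nonneg_right (hC v v' hv hv') (add_nonneg (hφ.nonneg v) (hφ.nonneg v'))
    _ = C * (φ v * (1 + v ^ γ) * (1 + v' ^ γ) + (1 + v ^ γ) * (φ v' * (1 + v' ^ γ))) := by ring
    _ ≤ C * (B * φ v * (1 + v' ^ γ) + (1 + v ^ γ) * (B * φ v')) :=
        mul_le_mul_of_nonneg_left (add_le_add (mul_le_mul_of_nonneg_right (hB v) hw')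
          (mul_le_mul_of_nonneg_left (hB v') hw)) hC₀
    _ = C * B * (φ v * (1 + v' ^ γ) + (1 + v ^ γ) * φ v') := by ring

lemma exists_integral_loss_le (hK : IsOffDiagPositiveKernel K γ) (hφ : IsNonnegTestFunction φ)
    (m : ℝ) : ∃ A, ∀ μ, IsMomentBounded γ m μ →
      ∫ p : ℝ × ℝ, K p.1 p.2 * (φ p.1 + φ p.2) ∂(μ.prod μ) ≤ A * ∫ v, φ v ∂μ := by
  obtain ⟨A, hA₀, hA⟩ := hK.exists_loss_le hφ
  obtain ⟨M, hM⟩ := hφ.exists_abs_le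
  refine ⟨A * (2 * m), fun μ hμ => ?_⟩
  have := hμ.isFiniteMeasure
  have hfst := (hφ.integrable μ).mul_prod hμ.integrable_one_add_rpow
  have hsnd := hμ.integrable_one_add_rpow.mul_prod (hφ.integrable μ)
  have hbdd : ∀ p : ℝ × ℝ, |φ p.1 + φ p.2| ≤ M + M := fun p =>
    (abs_add_le _ _).trans (add_le_add (hM _) (hM _))
  have hcont := hφ.continuous
  calc ∫ p : ℝ × ℝ, K p.1 p.2 * (φ p.1 + φ p.2) ∂(μ.prod μ)
      ≤ ∫ p : ℝ × ℝ, A * (φ p.1 * (1 + p.2 ^ γ) + (1 + p.1 ^ γ) * φ p.2) ∂(μ.prod μ) := by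
        refine integral_mono_ae (hK.integrable_mul hμ (by fun_prop) hbdd)
          ((hfst.add hsnd).const_mul _) ?_
        filter_upwards [hμ.ae_prod_pos] with p ⟨h₁, h₂⟩ using hA _ _ h₁ h₂
    _ = A * (2 * ∫ v, (1 + v ^ γ) ∂μ) * ∫ v, φ v ∂μ := by
        rw [integral_const_mul, integral_add hfst hsnd,
          integral_prod_mul φ fun v : ℝ => 1 + v ^ γ, integral_prod_mul (fun v : ℝ => 1 + v ^ γ) φ]
        ring
    _ ≤ A * (2 * m) * ∫ v, φ v ∂μ := by
        have hφμ : 0 ≤ ∫ v, φ v ∂μ := integral_nonneg hφ.nonneg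
        have hle := hμ.integral_one_add_rpow_le
        gcongr

lemma exists_coagulationGain_sub_le_coagulationRate (hK : IsOffDiagPositiveKernel K γ)
    (hφ : IsNonnegTestFunction φ) (m : ℝ) : ∃ A, ∀ μ, IsMomentBounded γ m μ →
      coagulationGain K φ μ - A * ∫ v, φ v ∂μ ≤ coagulationRate K φ μ := by
  obtain ⟨A, hA⟩ := hK.exists_integral_loss_le hφ m
  obtain ⟨M, hM⟩ := hφ.exists_abs_le
  refine ⟨A, fun μ hμ => ?_⟩
  have hcont := hφ.continuous
  have hgain := hK.integrable_mul hμ (ψ := fun p => φ (p.1 + p.2)) (by fun_prop) fun _ => hM _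
  have hloss := hK.integrable_mul hμ (ψ := fun p => φ p.1 + φ p.2) (by fun_prop) fun p =>
    (abs_add_le _ _).trans (add_le_add (hM _) (hM _))
  have hsplit : coagulationRate K φ μ =
      coagulationGain K φ μ - ∫ p : ℝ × ℝ, K p.1 p.2 * (φ p.1 + φ p.2) ∂(μ.prod μ) := by
    rw [coagulationGain, ← integral_sub hgain hloss, coagulationRate]
    refine integral_congr_ae (ae_of_all _ fun p => ?_)
    ring
  linarith [hA μ hμ]

end IsOffDiagPositiveKernel

end CollisionOperator

namespace KernelAssumptionA

variable {K h : ℝ → ℝ → ℝ} {g : ℝ → ℝ} {γ H H₀ H₁ G₀ G₁ k : ℝ} {v v' : ℝ}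

lemma div_add_mem_Icc (hv : 0 < v) (hv' : 0 < v') : v / (v + v') ∈ Icc (0 : ℝ) 1 :=
  ⟨by positivity, div_le_one_of_le₀ (by linarith) (by positivity)⟩

lemma continuousOn_kernel (hK : KernelAssumptionA K h g γ H H₀ H₁ G₀ G₁ k) :
    ContinuousOn (fun p : ℝ × ℝ => K p.1 p.2) (Ioi 0 ×ˢ Ioi 0) := by
  have hratio : ContinuousOn (fun p : ℝ × ℝ => p.1 / (p.1 + p.2)) (Ioi 0 ×ˢ Ioi 0) :=
    ContinuousOn.div (by fun_prop) (by fun_prop) fun p hp => (add_pos hp.1 hp.2).ne'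
  have hg : ContinuousOn (fun p : ℝ × ℝ => g (p.1 / (p.1 + p.2))) (Ioi 0 ×ˢ Ioi 0) :=
    hK.g_cont.comp hratio fun p hp => div_add_mem_Icc hp.1 hp.2
  refine ((hK.h_cont.mono (prod_mono Ioi_subset_Ici_self Ioi_subset_Ici_self)).mul hg).congr ?_
  exact fun p hp => hK.K_eq p.1 p.2 (le_of_lt hp.1) (le_of_lt hp.2) (add_pos hp.1 hp.2)

lemma kernel_le (hK : KernelAssumptionA K h g γ H H₀ H₁ G₀ G₁ k) (hv : 0 < v) (hv' : 0 < v') :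
    K v v' ≤ H₁ * G₁ * ((1 + v ^ γ) * (1 + v' ^ γ)) := by
  have hH := hK.H₁_pos.le
  have hG := hK.G₁_pos.le
  have hratio := div_add_mem_Icc hv hv'
  have hg : 0 ≤ g (v / (v + v')) :=
    (mul_nonneg hK.G₀_pos.le (by positivity)).trans (hK.g_lower _ hratio)
  have hw : 0 ≤ v ^ γ * v' ^ γ := by positivity
  calc K v v' = h v v' * g (v / (v + v')) := hK.K_eq v v' hv.le hv'.le (add_pos hv hv')
    _ ≤ H₁ * (v ^ γ + v' ^ γ) * G₁ :=
        mul_le_mul (hK.h_upper v v' hv.le hv'.le) (hK.g_upper _ hratio) hg (by positivity)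
    _ = H₁ * G₁ * (v ^ γ + v' ^ γ) := by ring
    _ ≤ H₁ * G₁ * ((1 + v ^ γ) * (1 + v' ^ γ)) := by
        gcongr
        linarith

lemma h_pos (hK : KernelAssumptionA K h g γ H H₀ H₁ G₀ G₁ k) (hv : 0 < v) (hv' : 0 < v') :
    0 < h v v' := by
  have hinv : 0 < v⁻¹ := inv_pos.2 hv
  have hinv' : 0 < v'⁻¹ := inv_pos.2 hv'
  obtain ⟨C, hC, hle⟩ := hK.h_posOn (v + v' + v⁻¹ + v'⁻¹) (by positivity)
  refine hC.trans_le (hle v ⟨?_, by linarith⟩ v' ⟨?_, by linarith⟩)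
  · rw [one_div]
    exact inv_le_of_inv_le₀ hv (by linarith)
  · rw [one_div]
    exact inv_le_of_inv_le₀ hv' (by linarith)

lemma kernel_pos_of_ne (hK : KernelAssumptionA K h g γ H H₀ H₁ G₀ G₁ k) (hv : 0 < v)
    (hv' : 0 < v') (hne : v ≠ v') : 0 < K v v' := by
  have hratio : v / (v + v') - 1 / 2 ≠ 0 := by
    intro heq
    rw [sub_eq_zero, div_eq_div_iff (add_pos hv hv').ne' two_ne_zero] at heq
    exact hne (by linarith)
  have hg : 0 < g (v / (v + v')) :=
    (mul_pos hK.G₀_pos (Real.rpow_pos_of_pos (abs_pos.2 hratio) k)).trans_le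
      (hK.g_lower _ (div_add_mem_Icc hv hv'))
  rw [hK.K_eq v v' hv.le hv'.le (add_pos hv hv')]
  exact mul_pos (hK.h_pos hv hv') hg

lemma isOffDiagPositiveKernel (hK : KernelAssumptionA K h g γ H H₀ H₁ G₀ G₁ k) :
    IsOffDiagPositiveKernel K γ where
  measurable_indicator := by
    classical
    rw [← piecewise_eq_indicator]
    exact hK.continuousOn_kernel.measurable_piecewise continuousOn_const
      (measurableSet_Ioi.prod measurableSet_Ioi)
  nonneg v v' hv hv' := hK.K_nonneg v v' hv.le hv'.le
  pos_of_ne _ _ hv hv' hne := hK.kernel_pos_of_ne hv hv' hne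
  exists_le := ⟨H₁ * G₁, (mul_pos hK.H₁_pos hK.G₁_pos).le, fun _ _ hv hv' => hK.kernel_le hv hv'⟩

end KernelAssumptionA

namespace IsWeakSolution

variable {K : ℝ → ℝ → ℝ} {γ T : ℝ} {f : ℝ → Measure ℝ} {fin : Measure ℝ} {φ : ℝ → ℝ}
  {s t x p q : ℝ}

lemma exists_isMomentBounded (hf : IsWeakSolution K γ T f fin) :
    ∃ m, ∀ t ∈ Icc 0 T, IsMomentBounded γ m (f t) := by
  obtain ⟨m, hm⟩ := hf.moment_bound
  exact ⟨m, fun t ht => ⟨hf.conc t ht, (hm t ht).1, (hm t ht).2⟩⟩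

lemma isFiniteMeasure (hf : IsWeakSolution K γ T f fin) (ht : t ∈ Icc 0 T) :
    IsFiniteMeasure (f t) := by
  obtain ⟨m, hm⟩ := hf.exists_isMomentBounded
  exact (hm t ht).isFiniteMeasure

/-- The solution as a map from `[0,T]` to the space of finite measures with its weak topology. -/
def finiteMeasure (hf : IsWeakSolution K γ T f fin) (t : Icc 0 T) : FiniteMeasure ℝ :=
  ⟨f t, hf.isFiniteMeasure t.2⟩

lemma continuous_finiteMeasure (hf : IsWeakSolution K γ T f fin) :
    Continuous hf.finiteMeasure := by
  rw [FiniteMeasure.continuous_iff_forall_continuous_integral]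
  exact fun φ => continuousOn_iff_continuous_domRestrict.1
    (hf.time_cont φ φ.continuous ⟨‖φ‖, φ.norm_coe_le_norm⟩)

lemma integrableOn_coagulationRate (hK : IsOffDiagPositiveKernel K γ)
    (hf : IsWeakSolution K γ T f fin) (hφ : IsNonnegTestFunction φ) :
    IntegrableOn (fun s => coagulationRate K φ (f s)) (Icc 0 T) := by
  obtain ⟨m, hm⟩ := hf.exists_isMomentBounded
  obtain ⟨M, hM⟩ := hφ.exists_abs_add_sub_sub_le
  obtain ⟨B, hB⟩ := hK.exists_abs_integral_mul_le m M
  have hcont := hφ.continuous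
  have hdiff : Continuous fun p : ℝ × ℝ => φ (p.1 + p.2) - φ p.1 - φ p.2 := by fun_prop
  have hrate : (fun s : Icc 0 T => coagulationRate K φ (f s)) = fun s : Icc 0 T =>
      ∫ p : ℝ × ℝ, (Ioi (0 : ℝ) ×ˢ Ioi (0 : ℝ)).indicator (fun p : ℝ × ℝ => K p.1 p.2) p *
        (φ (p.1 + p.2) - φ p.1 - φ p.2) ∂((f s).prod (f s)) := by
    funext s
    refine integral_congr_ae ?_
    filter_upwards [IsOffDiagPositiveKernel.indicator_ae_eq K (hm s s.2)] with p hp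
    exact congrArg (· * _) hp.symm
  have hmeas : Measurable fun s : Icc 0 T => coagulationRate K φ (f s) := by
    rw [hrate]
    exact (stronglyMeasurable_integral_prod_self hf.continuous_finiteMeasure
      (hK.measurable_indicator.mul hdiff.measurable).stronglyMeasurable).measurable
  exact Integrable.of_bound
    (aemeasurable_restrict_of_measurable_subtype measurableSet_Icc hmeas).aestronglyMeasurable B
    ((ae_restrict_mem measurableSet_Icc).mono fun s hs => hB _ (hm s hs) _ hM)

lemma intervalIntegrable_coagulationRate (hK : IsOffDiagPositiveKernel K γ)
    (hf : IsWeakSolution K γ T f fin) (hφ : IsNonnegTestFunction φ) (hs : s ∈ Icc 0 T)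
    (ht : t ∈ Icc 0 T) :
    IntervalIntegrable (fun s => coagulationRate K φ (f s)) volume s t :=
  ((hf.integrableOn_coagulationRate hK hφ).mono_set
    (uIcc_subset_Icc hs ht)).intervalIntegrable

lemma integral_sub_initial_eq (hK : IsOffDiagPositiveKernel K γ)
    (hf : IsWeakSolution K γ T f fin) (hφ : IsNonnegTestFunction φ) (ht : t ∈ Icc 0 T) :
    ∫ v, φ v ∂(f t) - ∫ v, φ v ∂fin = 1 / 2 * ∫ s in 0..t, coagulationRate K φ (f s) := by
  obtain ⟨m, hm⟩ := hf.exists_isMomentBounded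
  obtain ⟨M, hM⟩ := hφ.exists_abs_add_sub_sub_le
  have hcont := hφ.continuous
  have hdiff : Continuous fun p : ℝ × ℝ => φ (p.1 + p.2) - φ p.1 - φ p.2 := by fun_prop
  rw [hf.weak_form φ hφ.continuous hφ.hasCompactSupport hφ.tsupport_subset t ht]
  congr 1
  refine intervalIntegral.integral_congr fun s hs => ?_
  rw [uIcc_of_le ht.1] at hs
  have hs' : s ∈ Icc 0 T := ⟨hs.1, hs.2.trans ht.2⟩
  have := hf.isFiniteMeasure hs'
  exact (integral_prod _ (hK.integrable_mul (hm s hs') hdiff hM)).symm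

lemma integral_initial_eq (hf : IsWeakSolution K γ T f fin) (hφ : IsNonnegTestFunction φ)
    (hT : 0 ≤ T) : ∫ v, φ v ∂fin = ∫ v, φ v ∂(f 0) := by
  have hweak := hf.weak_form φ hφ.continuous hφ.hasCompactSupport hφ.tsupport_subset 0 ⟨le_rfl, hT⟩
  rw [intervalIntegral.integral_same, mul_zero] at hweak
  exact (sub_eq_zero.1 hweak).symm

lemma integral_sub_eq (hK : IsOffDiagPositiveKernel K γ) (hf : IsWeakSolution K γ T f fin)
    (hφ : IsNonnegTestFunction φ) (hs : s ∈ Icc 0 T) (ht : t ∈ Icc 0 T) :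
    ∫ v, φ v ∂(f t) - ∫ v, φ v ∂(f s) = 1 / 2 * ∫ r in s..t, coagulationRate K φ (f r) := by
  have h₀ : (0 : ℝ) ∈ Icc 0 T := ⟨le_rfl, hs.1.trans hs.2⟩
  rw [← intervalIntegral.integral_interval_sub_left
    (hf.intervalIntegrable_coagulationRate hK hφ h₀ ht)
    (hf.intervalIntegrable_coagulationRate hK hφ h₀ hs), mul_sub,
    ← hf.integral_sub_initial_eq hK hφ ht, ← hf.integral_sub_initial_eq hK hφ hs]
  ring

lemma integral_eq_zero_of_le (hK : IsOffDiagPositiveKernel K γ)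
    (hf : IsWeakSolution K γ T f fin) (hφ : IsNonnegTestFunction φ) (ht : t ∈ Icc 0 T)
    (hzero : ∫ v, φ v ∂(f t) = 0) (hs : s ∈ Icc 0 t) : ∫ v, φ v ∂(f s) = 0 := by
  obtain ⟨m, hm⟩ := hf.exists_isMomentBounded
  obtain ⟨A, hA⟩ := hK.exists_coagulationGain_sub_le_coagulationRate hφ m
  have hsub : Icc 0 t ⊆ Icc 0 T := Icc_subset_Icc_right ht.2
  have hcont : ContinuousOn (fun r => ∫ v, φ v ∂(f r)) (Icc 0 t) :=
    (hf.time_cont φ hφ.continuous hφ.exists_abs_le).mono hsub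
  refine eqOn_zero_of_le_mul_integral_right (C := A / 2) hcont
    (fun r _ => integral_nonneg hφ.nonneg) (fun r hr => ?_) hs
  have hrate : ∫ r' in r..t, -A * ∫ v, φ v ∂(f r') ≤ ∫ r' in r..t, coagulationRate K φ (f r') := by
    refine intervalIntegral.integral_mono_on hr.2 ?_
      (hf.intervalIntegrable_coagulationRate hK hφ (hsub hr) ht) fun r' hr' => ?_
    · exact ((hcont.mono (Icc_subset_Icc_left hr.1)).intervalIntegrable_of_Icc hr.2).const_mul _
    · have hr'T : r' ∈ Icc 0 T := ⟨hr.1.trans hr'.1, hr'.2.trans ht.2⟩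
      linarith [hA _ (hm r' hr'T), hK.coagulationGain_nonneg hφ.nonneg (hm r' hr'T)]
  rw [intervalIntegral.integral_const_mul] at hrate
  linarith [hf.integral_sub_eq hK hφ (hsub hr) ht]

lemma mem_support_of_mem_support_initial [IsFiniteMeasure fin] (hK : IsOffDiagPositiveKernel K γ)
    (hf : IsWeakSolution K γ T f fin) (hx₀ : 0 < x) (hx : x ∈ fin.support) (ht : t ∈ Icc 0 T) :
    x ∈ (f t).support := by
  have := hf.isFiniteMeasure ht
  rw [mem_support_iff_forall_isNonnegTestFunction hx₀] at hx ⊢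
  intro φ hφ hφx
  refine (integral_nonneg hφ.nonneg).lt_of_ne' fun hzero => (hx φ hφ hφx).ne' ?_
  rw [hf.integral_initial_eq hφ (ht.1.trans ht.2)]
  exact hf.integral_eq_zero_of_le hK hφ ht hzero ⟨le_rfl, ht.1⟩

lemma add_mem_support (hK : IsOffDiagPositiveKernel K γ) (hf : IsWeakSolution K γ T f fin)
    (hp₀ : 0 < p) (hq₀ : 0 < q) (hpq : p ≠ q) (ht : t ∈ Ioc 0 T)
    (hp : ∀ s ∈ Ioo 0 t, p ∈ (f s).support) (hq : ∀ s ∈ Ioo 0 t, q ∈ (f s).support) :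
    p + q ∈ (f t).support := by
  obtain ⟨m, hm⟩ := hf.exists_isMomentBounded
  have htT : t ∈ Icc 0 T := Ioc_subset_Icc_self ht
  have h₀T : (0 : ℝ) ∈ Icc 0 T := ⟨le_rfl, htT.1.trans htT.2⟩
  have := hf.isFiniteMeasure htT
  rw [mem_support_iff_forall_isNonnegTestFunction (add_pos hp₀ hq₀)]
  intro φ hφ hφpq
  refine (integral_nonneg hφ.nonneg).lt_of_ne' fun hzero => ?_
  have hvanish := fun s => hf.integral_eq_zero_of_le (s := s) hK hφ htT hzero
  obtain ⟨A, hA⟩ := hK.exists_coagulationGain_sub_le_coagulationRate hφ m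
  have hrate : 0 < ∫ s in 0..t, coagulationRate K φ (f s) := by
    refine intervalIntegral.intervalIntegral_pos_of_pos_on
      (hf.intervalIntegrable_coagulationRate hK hφ h₀T htT) (fun s hs => ?_) ht.1
    have hms := hm s ⟨hs.1.le, hs.2.le.trans ht.2⟩
    have hgain := hK.coagulationGain_pos hφ hms hp₀ hq₀ hpq (hp s hs) (hq s hs) hφpq
    have hle := hA _ hms
    rw [hvanish s (Ioo_subset_Icc_self hs), mul_zero, sub_zero] at hle
    exact hgain.trans_le hle
  have hbalance := hf.integral_sub_eq hK hφ h₀T htT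
  rw [hzero, hvanish 0 ⟨le_rfl, htT.1⟩] at hbalance
  linarith

lemma add_nsmul_mem_support (hK : IsOffDiagPositiveKernel K γ) (hf : IsWeakSolution K γ T f fin)
    (hp₀ : 0 < p) (hq₀ : 0 < q) (hpq : p ≠ q) (hp : ∀ s ∈ Ioc 0 T, p ∈ (f s).support)
    (hq : ∀ s ∈ Ioc 0 T, q ∈ (f s).support) (n : ℕ) :
    ∀ t ∈ Ioc 0 T, p + n • q ∈ (f t).support := by
  induction n with
  | zero => simpa only [zero_nsmul, add_zero] using hp
  | succ n ih =>
    have hne : p + n • q ≠ q := by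
      rcases n with _ | n
      · rwa [zero_nsmul, add_zero]
      · rw [succ_nsmul]
        have hnq : 0 ≤ n • q := nsmul_nonneg hq₀.le n
        exact ne_of_gt (by linarith)
    intro t ht
    have hsub : Ioo 0 t ⊆ Ioc 0 T := Ioo_subset_Ioc_self.trans (Ioc_subset_Ioc_right ht.2)
    rw [succ_nsmul, ← add_assoc]
    exact hf.add_mem_support hK (add_pos_of_pos_of_nonneg hp₀ (nsmul_nonneg hq₀.le n)) hq₀ hne ht
      (fun s hs => ih s (hsub hs)) fun s hs => hq s (hsub hs)

end IsWeakSolution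

theorem positivity_of_tails_general {K : ℝ → ℝ → ℝ} {γ T : ℝ} {fin : Measure ℝ}
    {f : ℝ → Measure ℝ} [IsFiniteMeasure fin] (hK : IsOffDiagPositiveKernel K γ)
    (hconc : fin (Iic 0) = 0) (hne : fin ≠ 0) (hdirac : ¬ IsSingleDirac fin)
    (hf : IsWeakSolution K γ T f fin) {t : ℝ} (ht : t ∈ Ioc 0 T) (R : ℝ) : 0 < f t (Ici R) := by
  obtain ⟨a, ha, b, hb, ha₀, hb₀, hab⟩ :=
    exists_ne_mem_support_of_not_isSingleDirac hconc hne hdirac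
  have persists : ∀ x ∈ fin.support, 0 < x → ∀ s ∈ Ioc 0 T, x ∈ (f s).support :=
    fun x hx hx₀ s hs => hf.mem_support_of_mem_support_initial hK hx₀ hx (Ioc_subset_Icc_self hs)
  obtain ⟨n, hn⟩ := Archimedean.arch R hb₀
  exact (Measure.mem_support_iff_forall _).1
    (hf.add_nsmul_mem_support hK ha₀ hb₀ hab (persists a ha ha₀) (persists b hb hb₀) n t ht) _
    (Ici_mem_nhds (by linarith))

/-- **Positivity.** If the initial datum is nonzero and not a single
Dirac measure, then for every `t ∈ (0,T]` and every `R > 0` the solution charges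
`[R,∞)` by a positive constant `C(t,R)`. -/
theorem positivity_of_tails
    (K h : ℝ → ℝ → ℝ) (g : ℝ → ℝ) (γ H H₀ H₁ G₀ G₁ k : ℝ)
    (hK : KernelAssumptionA K h g γ H H₀ H₁ G₀ G₁ k)
    (T : ℝ) (hT : 0 < T)
    (fin : Measure ℝ) (hconc : fin (Iic 0) = 0) (hne : fin ≠ 0)
    (hγmom : Integrable (fun v => 1 + v ^ γ) fin)
    (hdirac : ¬ IsSingleDirac fin)
    (f : ℝ → Measure ℝ) (hf : IsWeakSolution K γ T f fin)
    (hmc : IsMassConserving T f fin) :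
    ∀ t ∈ Ioc (0 : ℝ) T, ∀ R : ℝ, 0 < R → ∃ C : ℝ, 0 < C ∧
      ENNReal.ofReal C ≤ f t (Ici R) ∧ 0 < f t (Ici R) := by
  intro t ht R _
  have := isFiniteMeasure_of_integrable_one_add_rpow hconc hγmom
  have hpos : 0 < f t (Ici R) :=
    positivity_of_tails_general hK.isOffDiagPositiveKernel hconc hne hdirac hf ht R
  obtain ⟨C, -, hC, hle⟩ := ENNReal.lt_iff_exists_real_btwn.1 hpos
  exact ⟨C, ENNReal.ofReal_pos.1 hC, hle.le, hpos⟩
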